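/- Let (Ω, 𝒜, μ) be a σ-finite measure space and let (T_s)_{s ≥ 0} be a semigroup of positive Dunford–Schwartz operators (T_{s+r} = T_s T_r) that is strongly continuous on L¹(μ) at every s > 0. Then for every f ∈ L¹(μ) the averages (1/t) ∫₀^t T_s(f) ds (Bochner integral in L¹(μ)) converge almost uniformly as t → ∞. -/

import Mathlib

open MeasureTheory Filter Set ENNReal Topology

variable {Ω : Type*} [MeasurableSpace Ω]

/-- `f` belongs to `L¹(μ) + L^∞(μ)`. -/
def MemL1pLinf (μ : Measure Ω) (f : Ω →ₘ[μ] ℝ) : Prop :=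
  ∃ g h : Ω →ₘ[μ] ℝ, eLpNorm g 1 μ ≠ ∞ ∧ eLpNorm h ⊤ μ ≠ ∞ ∧ f = g + h

/-- A positive Dunford–Schwartz operator: linear and positive on `L¹+L^∞`,
contracting both the `L¹`- and `L^∞`-norms. -/
structure IsPosDS (μ : Measure Ω) (T : (Ω →ₘ[μ] ℝ) → (Ω →ₘ[μ] ℝ)) : Prop where
  map_add : ∀ f g, MemL1pLinf μ f → MemL1pLinf μ g → T (f + g) = T f + T g
  map_smul : ∀ (c : ℝ) (f), MemL1pLinf μ f → T (c • f) = c • T f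
  map_pos : ∀ f, MemL1pLinf μ f → 0 ≤ f → 0 ≤ T f
  norm_one : ∀ f, MemL1pLinf μ f → eLpNorm (T f) 1 μ ≤ eLpNorm f 1 μ
  norm_top : ∀ f, MemL1pLinf μ f → eLpNorm (T f) ⊤ μ ≤ eLpNorm f ⊤ μ

/-- The Cesàro averages `A_n(f) = (1/n) ∑_{k<n} T^k f`. -/
noncomputable def cesaro (μ : Measure Ω) (T : (Ω →ₘ[μ] ℝ) → (Ω →ₘ[μ] ℝ)) (n : ℕ)
    (f : Ω →ₘ[μ] ℝ) : Ω →ₘ[μ] ℝ :=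
  (n : ℝ)⁻¹ • ∑ k ∈ Finset.range n, T^[k] f

/-- Almost uniform convergence of a net `F` to `f`. -/
def AuTendsto {ι : Type*} (μ : Measure Ω) (l : Filter ι) (F : ι → Ω →ₘ[μ] ℝ)
    (f : Ω →ₘ[μ] ℝ) : Prop :=
  ∀ ε : ℝ, 0 < ε → ∃ E : Set Ω, MeasurableSet E ∧ μ Eᶜ ≤ ENNReal.ofReal ε ∧
    Tendsto (fun i => eLpNorm (E.indicator (⇑(F i - f))) ⊤ μ) l (𝓝 0)

/-- `R_μ`: elements of `L¹+L^∞` whose distribution tails are finite. -/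
def MemRmu (μ : Measure Ω) (f : Ω →ₘ[μ] ℝ) : Prop :=
  MemL1pLinf μ f ∧ ∀ lam : ℝ, 0 < lam → μ {ω | lam < |f ω|} < ∞

/-!
Write `A_n` for the Cesàro averages of `T_1`. Since `∫₀ⁿ T_s f ds = n A_n(∫₀¹ T_s f ds)` and, for
`f ≥ 0`, the integral `∫₀ᵗ T_s f ds` is monotone in `t`, the continuous averages are squeezed
between multiples of `A_⌊t⌋` and `A_⌈t⌉` with factors tending to `1`. This reduces the claim to the
individual ergodic theorem for a positive Dunford–Schwartz operator `T`, which follows from Banach's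
principle: Hopf's maximal ergodic inequality gives weak-type maximal bounds on `L¹` and, through the
Kadison inequality `(T f)² ≤ T (f²)`, on `L²`, so that the functions with a.u. Cauchy averages form
a closed set. By the mean ergodic theorem in `L²`, every `f ∈ L² ∩ L^∞` is an `L²`-limit of sums of
a fixed vector and a coboundary `h - T h` with `h ∈ L^∞`, whose averages converge uniformly.
-/

/-! ### Order and norms of classes of measurable functions -/

section Order

variable {μ : Measure Ω}

instance {E : Type*} [TopologicalSpace E] [AddCommMonoid E] [PartialOrder E]
    [IsOrderedAddMonoid E] [ContinuousAdd E] : IsOrderedAddMonoid (Ω →ₘ[μ] E) where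
  add_le_add_left f g h k := by
    rw [← AEEqFun.coeFn_le] at h ⊢
    filter_upwards [h, AEEqFun.coeFn_add f k, AEEqFun.coeFn_add g k] with x hx hfk hgk
    simpa only [hfk, hgk, Pi.add_apply] using add_le_add_left hx (k x)

theorem aeEqFun_nonneg_iff {f : Ω →ₘ[μ] ℝ} : 0 ≤ f ↔ ∀ᵐ x ∂μ, 0 ≤ f x := by
  rw [← AEEqFun.coeFn_le]
  refine eventually_congr ?_
  filter_upwards [AEEqFun.coeFn_zero (μ := μ) (β := ℝ)] with x hx
  rw [hx, Pi.zero_apply]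

instance : IsOrderedModule ℝ (Ω →ₘ[μ] ℝ) := .of_smul_nonneg fun c hc f hf => by
  rw [aeEqFun_nonneg_iff] at hf ⊢
  filter_upwards [hf, AEEqFun.coeFn_smul c f] with x hx hcf
  rw [hcf]
  exact mul_nonneg hc hx

instance {p : ℝ≥0∞} : IsOrderedModule ℝ (Lp ℝ p μ) := .of_smul_nonneg fun _ hc _ hf =>
  smul_nonneg (β := Ω →ₘ[μ] ℝ) hc hf

theorem aeEqFun_one_nonneg : 0 ≤ (1 : Ω →ₘ[μ] ℝ) := by
  rw [aeEqFun_nonneg_iff]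
  filter_upwards [AEEqFun.coeFn_one (μ := μ) (β := ℝ)] with x hx
  rw [hx]
  exact zero_le_one

theorem aeEqFun_mul_self_nonneg (f : Ω →ₘ[μ] ℝ) : 0 ≤ f * f := by
  rw [aeEqFun_nonneg_iff]
  filter_upwards [AEEqFun.coeFn_mul f f] with x hx
  rw [hx]
  exact mul_self_nonneg (f x)

theorem eLpNorm_mono_of_abs_le {p : ℝ≥0∞} {f g : Ω →ₘ[μ] ℝ} (h : |f| ≤ g) :
    eLpNorm f p μ ≤ eLpNorm g p μ := by
  refine eLpNorm_mono_ae ?_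
  filter_upwards [AEEqFun.coeFn_le.2 h, AEEqFun.coeFn_abs f] with x hx hfx
  rw [hfx] at hx
  exact hx.trans (le_abs_self _)

theorem eLpNorm_aeEqFun_abs (p : ℝ≥0∞) (f : Ω →ₘ[μ] ℝ) : eLpNorm ⇑|f| p μ = eLpNorm f p μ := by
  refine eLpNorm_congr_norm_ae ?_
  filter_upwards [AEEqFun.coeFn_abs f] with x hx
  rw [hx, Real.norm_eq_abs, abs_abs, Real.norm_eq_abs]

theorem mem_Lp_of_abs_le {p : ℝ≥0∞} {f g : Ω →ₘ[μ] ℝ} (hg : g ∈ Lp ℝ p μ) (h : |f| ≤ g) :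
    f ∈ Lp ℝ p μ :=
  Lp.mem_Lp_iff_eLpNorm_lt_top.2
    ((eLpNorm_mono_of_abs_le h).trans_lt (Lp.mem_Lp_iff_eLpNorm_lt_top.1 hg))

theorem eLpNorm_one_add_of_nonneg {f g : Ω →ₘ[μ] ℝ} (hf : 0 ≤ f) (hg : 0 ≤ g) :
    eLpNorm (f + g : Ω →ₘ[μ] ℝ) 1 μ = eLpNorm f 1 μ + eLpNorm g 1 μ := by
  simp only [eLpNorm_one_eq_lintegral_enorm]
  rw [← lintegral_add_left' f.aemeasurable.enorm]
  refine lintegral_congr_ae ?_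
  filter_upwards [aeEqFun_nonneg_iff.1 hf, aeEqFun_nonneg_iff.1 hg, AEEqFun.coeFn_add f g]
    with x hfx hgx hx
  rw [hx, Pi.add_apply, Real.enorm_of_nonneg hfx, Real.enorm_of_nonneg hgx,
    Real.enorm_of_nonneg (add_nonneg hfx hgx), ENNReal.ofReal_add hfx hgx]

end Order

section SumSpace

variable {μ : Measure Ω} {f g : Ω →ₘ[μ] ℝ}

/-- `L¹(μ) + L^∞(μ)` as a linear subspace of the space of all measurable functions. -/
def l1pLinf (μ : Measure Ω) : Submodule ℝ (Ω →ₘ[μ] ℝ) :=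
  Lp.LpSubmodule ℝ ℝ 1 μ ⊔ Lp.LpSubmodule ℝ ℝ ⊤ μ

theorem mem_l1pLinf : f ∈ l1pLinf μ ↔ MemL1pLinf μ f := by
  constructor
  · intro hf
    obtain ⟨g, hg, h, hh, rfl⟩ := Submodule.mem_sup.1 hf
    exact ⟨g, h, (Lp.mem_Lp_iff_eLpNorm_lt_top.1 hg).ne,
      (Lp.mem_Lp_iff_eLpNorm_lt_top.1 hh).ne, rfl⟩
  · rintro ⟨g, h, hg, hh, rfl⟩
    exact Submodule.add_mem_sup (Lp.mem_Lp_iff_eLpNorm_lt_top.2 hg.lt_top)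
      (Lp.mem_Lp_iff_eLpNorm_lt_top.2 hh.lt_top)

theorem one_mem_Lp_top : (1 : Ω →ₘ[μ] ℝ) ∈ Lp ℝ ⊤ μ := by
  rw [Lp.mem_Lp_iff_eLpNorm_lt_top, eLpNorm_congr_ae AEEqFun.coeFn_one]
  exact (memLp_top_const (1 : ℝ)).2

namespace MemL1pLinf

theorem of_mem_Lp_one (hf : f ∈ Lp ℝ 1 μ) : MemL1pLinf μ f :=
  mem_l1pLinf.1 (Submodule.mem_sup_left hf)

theorem of_mem_Lp_top (hf : f ∈ Lp ℝ ⊤ μ) : MemL1pLinf μ f :=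
  mem_l1pLinf.1 (Submodule.mem_sup_right hf)

protected theorem one : MemL1pLinf μ 1 := of_mem_Lp_top one_mem_Lp_top

protected theorem add (hf : MemL1pLinf μ f) (hg : MemL1pLinf μ g) : MemL1pLinf μ (f + g) :=
  mem_l1pLinf.1 ((l1pLinf μ).add_mem (mem_l1pLinf.2 hf) (mem_l1pLinf.2 hg))

protected theorem sub (hf : MemL1pLinf μ f) (hg : MemL1pLinf μ g) : MemL1pLinf μ (f - g) :=
  mem_l1pLinf.1 ((l1pLinf μ).sub_mem (mem_l1pLinf.2 hf) (mem_l1pLinf.2 hg))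

protected theorem smul (c : ℝ) (hf : MemL1pLinf μ f) : MemL1pLinf μ (c • f) :=
  mem_l1pLinf.1 ((l1pLinf μ).smul_mem c (mem_l1pLinf.2 hf))

protected theorem neg (hf : MemL1pLinf μ f) : MemL1pLinf μ (-f) :=
  mem_l1pLinf.1 ((l1pLinf μ).neg_mem (mem_l1pLinf.2 hf))

protected theorem sum {ι : Type*} {f : ι → Ω →ₘ[μ] ℝ} (hf : ∀ i, MemL1pLinf μ (f i))
    (s : Finset ι) : MemL1pLinf μ (∑ i ∈ s, f i) :=
  mem_l1pLinf.1 ((l1pLinf μ).sum_mem fun i _ => mem_l1pLinf.2 (hf i))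

theorem of_mem_Lp {p : ℝ≥0∞} (hp : 1 ≤ p) (hf : f ∈ Lp ℝ p μ) : MemL1pLinf μ f := by
  obtain rfl | hp_top := eq_or_ne p ⊤
  · exact of_mem_Lp_top hf
  replace hf : MemLp f p μ := Lp.mem_Lp_iff_memLp.1 hf
  set s : Set Ω := {x | 1 ≤ ‖f x‖₊}
  have hs : MeasurableSet s := measurableSet_le measurable_const f.measurable.nnnorm
  have hμs : μ s ≠ ∞ := (hf.meas_ge_lt_top (by positivity) hp_top one_ne_zero).ne
  have hlarge : MemLp (s.indicator f) 1 μ :=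
    (hf.indicator hs).mono_exponent_of_measure_support_ne_top
      (fun x hx => indicator_of_notMem hx _) hμs hp
  have hsmall : MemLp (sᶜ.indicator f) ⊤ μ := by
    refine memLp_top_of_bound (f.aestronglyMeasurable.indicator hs.compl) 1 (ae_of_all _ ?_)
    intro x
    by_cases hx : x ∈ s
    · simp [hx]
    · rw [indicator_of_mem hx]
      exact (not_le.1 hx).le
  have hsplit : f = (hlarge.toLp : Ω →ₘ[μ] ℝ) + hsmall.toLp := by
    ext1
    filter_upwards [hlarge.coeFn_toLp, hsmall.coeFn_toLp, AEEqFun.coeFn_add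
      (hlarge.toLp : Ω →ₘ[μ] ℝ) (hsmall.toLp : Ω →ₘ[μ] ℝ)] with x hl hsm hadd
    rw [hadd, Pi.add_apply, hl, hsm, indicator_self_add_compl_apply]
  rw [hsplit]
  exact (of_mem_Lp_one hlarge.toLp.2).add (of_mem_Lp_top hsmall.toLp.2)

end MemL1pLinf

end SumSpace

section Jensen

variable {μ : Measure Ω} {f g : Ω →ₘ[μ] ℝ}

theorem eLpNorm_two_pow_two (f : Ω →ₘ[μ] ℝ) :
    eLpNorm f 2 μ ^ 2 = eLpNorm (f * f : Ω →ₘ[μ] ℝ) 1 μ := by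
  have hsq : eLpNorm f 2 μ ^ 2 = ∫⁻ x, ‖f x‖ₑ ^ 2 ∂μ := by
    simpa using eLpNorm_nnreal_pow_eq_lintegral (f := f) (μ := μ) (p := 2) two_ne_zero
  rw [hsq, eLpNorm_one_eq_lintegral_enorm]
  refine lintegral_congr_ae ?_
  filter_upwards [AEEqFun.coeFn_mul f f] with x hx
  rw [hx, Pi.mul_apply, enorm_mul, sq]

theorem mul_self_mem_Lp_one (hf : f ∈ Lp ℝ 2 μ) : f * f ∈ Lp ℝ 1 μ := by
  rw [Lp.mem_Lp_iff_eLpNorm_lt_top, ← eLpNorm_two_pow_two]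
  exact ENNReal.pow_lt_top (Lp.mem_Lp_iff_eLpNorm_lt_top.1 hf)

theorem two_mul_smul_le_mul_self_add (c : ℝ) (f : Ω →ₘ[μ] ℝ) :
    (2 * c) • f ≤ f * f + c ^ 2 • 1 := by
  rw [← AEEqFun.coeFn_le]
  filter_upwards [AEEqFun.coeFn_smul (2 * c) f, AEEqFun.coeFn_add (f * f) (c ^ 2 • 1),
    AEEqFun.coeFn_mul f f, AEEqFun.coeFn_smul (c ^ 2) (1 : Ω →ₘ[μ] ℝ),
    AEEqFun.coeFn_one (μ := μ) (β := ℝ)] with x hcf hadd hff hc1 h1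
  simp only [hcf, hadd, hff, hc1, h1, Pi.smul_apply, Pi.add_apply, Pi.mul_apply, Pi.one_apply,
    smul_eq_mul]
  linarith [two_mul_le_add_sq c (f x)]

theorem mul_self_le_of_forall_two_mul_smul_le (h : ∀ c : ℝ, (2 * c) • f ≤ g + c ^ 2 • 1) :
    f * f ≤ g := by
  have hrat : ∀ᵐ x ∂μ, ∀ q : ℚ, 2 * (q : ℝ) * f x ≤ g x + (q : ℝ) ^ 2 := by
    refine ae_all_iff.2 fun q => ?_
    filter_upwards [AEEqFun.coeFn_le.2 (h q), AEEqFun.coeFn_smul (2 * (q : ℝ)) f,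
      AEEqFun.coeFn_add g ((q : ℝ) ^ 2 • 1), AEEqFun.coeFn_smul ((q : ℝ) ^ 2) (1 : Ω →ₘ[μ] ℝ),
      AEEqFun.coeFn_one (μ := μ) (β := ℝ)] with x hx hqf hadd hq1 h1
    simpa only [hqf, hadd, hq1, h1, Pi.smul_apply, Pi.add_apply, Pi.one_apply, smul_eq_mul,
      mul_one] using hx
  rw [← AEEqFun.coeFn_le]
  filter_upwards [hrat, AEEqFun.coeFn_mul f f] with x hx hff
  have hreal (c : ℝ) : 2 * c * f x ≤ g x + c ^ 2 :=
    (Rat.denseRange_cast (𝕜 := ℝ)).induction_on c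
      (isClosed_le (by fun_prop) (by fun_prop)) hx
  rw [hff, Pi.mul_apply]
  linarith [hreal (f x)]

end Jensen

section SumSmul

variable {μ : Measure Ω}

theorem eLpNorm_sum_smul_le {ι : Type*} {s : Finset ι} {w : ι → ℝ} {g : ι → Ω →ₘ[μ] ℝ}
    {p C : ℝ≥0∞} (hp : 1 ≤ p) (hw : ∀ i ∈ s, 0 ≤ w i) (hw_sum : ∑ i ∈ s, w i ≤ 1)
    (hg : ∀ i ∈ s, eLpNorm (g i) p μ ≤ C) : eLpNorm (∑ i ∈ s, w i • g i : Ω →ₘ[μ] ℝ) p μ ≤ C := by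
  have hcoe : ⇑(∑ i ∈ s, w i • g i : Ω →ₘ[μ] ℝ) =ᵐ[μ] ∑ i ∈ s, w i • ⇑(g i) :=
    (AEEqFun.coeFn_finsetSum s fun i => w i • g i).trans
      (eventuallyEq_sum fun i _ => AEEqFun.coeFn_smul (w i) (g i))
  calc eLpNorm (∑ i ∈ s, w i • g i : Ω →ₘ[μ] ℝ) p μ
      = eLpNorm (∑ i ∈ s, w i • ⇑(g i)) p μ := eLpNorm_congr_ae hcoe
    _ ≤ ∑ i ∈ s, eLpNorm (w i • ⇑(g i)) p μ :=
      eLpNorm_sum_le (fun i _ => (g i).aestronglyMeasurable.const_smul (w i)) hp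
    _ ≤ ∑ i ∈ s, ENNReal.ofReal (w i) * C := by
      refine Finset.sum_le_sum fun i hi => ?_
      rw [eLpNorm_const_smul, Real.enorm_of_nonneg (hw i hi)]
      gcongr
      exact hg i hi
    _ = ENNReal.ofReal (∑ i ∈ s, w i) * C := by
      rw [← Finset.sum_mul, ENNReal.ofReal_sum_of_nonneg hw]
    _ ≤ C := mul_le_of_le_one_left' (ENNReal.ofReal_le_one.2 hw_sum)

end SumSmul

/-! ### Positive Dunford–Schwartz operators -/

namespace IsPosDS

variable {μ : Measure Ω} {T : (Ω →ₘ[μ] ℝ) → (Ω →ₘ[μ] ℝ)} {f g : Ω →ₘ[μ] ℝ}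

theorem map_mem (hT : IsPosDS μ T) (hf : MemL1pLinf μ f) : MemL1pLinf μ (T f) := by
  obtain ⟨g, h, hg, hh, rfl⟩ := hf
  have hg' : MemL1pLinf μ g := .of_mem_Lp_one (Lp.mem_Lp_iff_eLpNorm_lt_top.2 hg.lt_top)
  have hh' : MemL1pLinf μ h := .of_mem_Lp_top (Lp.mem_Lp_iff_eLpNorm_lt_top.2 hh.lt_top)
  exact ⟨T g, T h, ((hT.norm_one g hg').trans_lt hg.lt_top).ne,
    ((hT.norm_top h hh').trans_lt hh.lt_top).ne, hT.map_add g h hg' hh'⟩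

theorem map_mem_Lp_one (hT : IsPosDS μ T) (hf : f ∈ Lp ℝ 1 μ) : T f ∈ Lp ℝ 1 μ :=
  Lp.mem_Lp_iff_eLpNorm_lt_top.2
    ((hT.norm_one f (.of_mem_Lp_one hf)).trans_lt (Lp.mem_Lp_iff_eLpNorm_lt_top.1 hf))

theorem map_neg (hT : IsPosDS μ T) (hf : MemL1pLinf μ f) : T (-f) = -T f := by
  simpa only [neg_one_smul] using hT.map_smul (-1) f hf

theorem map_sub (hT : IsPosDS μ T) (hf : MemL1pLinf μ f) (hg : MemL1pLinf μ g) :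
    T (f - g) = T f - T g := by
  have hadd := hT.map_add (f - g) g (hf.sub hg) hg
  rw [sub_add_cancel] at hadd
  exact eq_sub_of_add_eq hadd.symm

theorem map_zero (hT : IsPosDS μ T) : T 0 = 0 := by
  simpa only [sub_self] using hT.map_sub (f := 1) .one .one

theorem map_sum (hT : IsPosDS μ T) {ι : Type*} {f : ι → Ω →ₘ[μ] ℝ}
    (hf : ∀ i, MemL1pLinf μ (f i)) (s : Finset ι) : T (∑ i ∈ s, f i) = ∑ i ∈ s, T (f i) := by
  induction s using Finset.cons_induction with
  | empty => exact hT.map_zero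
  | cons i s _ ih => rw [Finset.sum_cons, Finset.sum_cons, hT.map_add _ _ (hf i) (.sum hf s), ih]

theorem mono (hT : IsPosDS μ T) (hf : MemL1pLinf μ f) (hg : MemL1pLinf μ g) (h : f ≤ g) :
    T f ≤ T g := by
  rw [← sub_nonneg, ← hT.map_sub hg hf]
  exact hT.map_pos _ (hg.sub hf) (sub_nonneg.2 h)

theorem abs_map_le (hT : IsPosDS μ T) (hf : MemL1pLinf μ f) (hf_abs : MemL1pLinf μ |f|) :
    |T f| ≤ T |f| := by
  refine abs_le'.2 ⟨hT.mono hf hf_abs (le_abs_self f), ?_⟩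
  rw [← hT.map_neg hf]
  exact hT.mono hf.neg hf_abs (neg_le_abs f)

theorem map_one_le (hT : IsPosDS μ T) : T 1 ≤ 1 := by
  have hnorm : eLpNorm (T 1) ⊤ μ ≤ 1 := by
    refine (hT.norm_top 1 .one).trans ?_
    rw [eLpNorm_congr_ae AEEqFun.coeFn_one, eLpNorm_exponent_top, ← ENNReal.ofReal_one]
    exact eLpNormEssSup_le_of_ae_bound (ae_of_all _ fun _ => by simp)
  rw [← AEEqFun.coeFn_le]
  filter_upwards [AEEqFun.coeFn_one (μ := μ) (β := ℝ), enorm_ae_le_eLpNormEssSup (T 1) μ]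
    with x h1 hx
  rw [h1]
  exact (le_abs_self _).trans
    (ENNReal.ofReal_le_one.1 ((ofReal_norm _).trans_le (hx.trans hnorm)))

protected theorem id : IsPosDS μ (_root_.id : (Ω →ₘ[μ] ℝ) → (Ω →ₘ[μ] ℝ)) :=
  ⟨fun _ _ _ _ => rfl, fun _ _ _ => rfl, fun _ _ => _root_.id, fun _ _ => le_rfl,
    fun _ _ => le_rfl⟩

theorem comp {S : (Ω →ₘ[μ] ℝ) → (Ω →ₘ[μ] ℝ)} (hS : IsPosDS μ S) (hT : IsPosDS μ T) :
    IsPosDS μ (S ∘ T) where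
  map_add f g hf hg := by
    simp only [Function.comp_apply, hT.map_add f g hf hg,
      hS.map_add _ _ (hT.map_mem hf) (hT.map_mem hg)]
  map_smul c f hf := by
    simp only [Function.comp_apply, hT.map_smul c f hf, hS.map_smul c _ (hT.map_mem hf)]
  map_pos f hf h := hS.map_pos _ (hT.map_mem hf) (hT.map_pos f hf h)
  norm_one f hf := (hS.norm_one _ (hT.map_mem hf)).trans (hT.norm_one f hf)
  norm_top f hf := (hS.norm_top _ (hT.map_mem hf)).trans (hT.norm_top f hf)

theorem iterate (hT : IsPosDS μ T) : ∀ n, IsPosDS μ T^[n]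
  | 0 => .id
  | n + 1 => (hT.iterate n).comp hT

protected theorem sum_smul {ι : Type*} {s : Finset ι} {w : ι → ℝ}
    {S : ι → (Ω →ₘ[μ] ℝ) → (Ω →ₘ[μ] ℝ)} (hS : ∀ i ∈ s, IsPosDS μ (S i))
    (hw : ∀ i ∈ s, 0 ≤ w i) (hw_sum : ∑ i ∈ s, w i ≤ 1) :
    IsPosDS μ (fun f => ∑ i ∈ s, w i • S i f) where
  map_add f g hf hg := by
    rw [← Finset.sum_add_distrib]
    exact Finset.sum_congr rfl fun i hi => by rw [(hS i hi).map_add f g hf hg, smul_add]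
  map_smul c f hf := by
    rw [Finset.smul_sum]
    exact Finset.sum_congr rfl fun i hi => by rw [(hS i hi).map_smul c f hf, smul_comm]
  map_pos f hf h :=
    Finset.sum_nonneg fun i hi => smul_nonneg (hw i hi) ((hS i hi).map_pos f hf h)
  norm_one f hf := eLpNorm_sum_smul_le le_rfl hw hw_sum fun i hi => (hS i hi).norm_one f hf
  norm_top f hf := eLpNorm_sum_smul_le le_top hw hw_sum fun i hi => (hS i hi).norm_top f hf

protected theorem cesaro (hT : IsPosDS μ T) (n : ℕ) : IsPosDS μ (cesaro μ T n) := by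
  have hcesaro : cesaro μ T n = fun f => ∑ k ∈ Finset.range n, (n : ℝ)⁻¹ • T^[k] f :=
    funext fun _ => Finset.smul_sum
  rw [hcesaro]
  exact IsPosDS.sum_smul (fun k _ => hT.iterate k) (fun _ _ => by positivity)
    (by simpa using mul_inv_le_one)

theorem mul_self_map_le (hT : IsPosDS μ T) (hf : f ∈ Lp ℝ 2 μ) : T f * T f ≤ T (f * f) := by
  have hf' : MemL1pLinf μ f := .of_mem_Lp one_le_two hf
  have hff : MemL1pLinf μ (f * f) := .of_mem_Lp_one (mul_self_mem_Lp_one hf)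
  refine mul_self_le_of_forall_two_mul_smul_le fun c => ?_
  calc (2 * c) • T f = T ((2 * c) • f) := (hT.map_smul _ _ hf').symm
    _ ≤ T (f * f + c ^ 2 • 1) :=
      hT.mono (hf'.smul _) (hff.add (MemL1pLinf.one.smul _)) (two_mul_smul_le_mul_self_add c f)
    _ = T (f * f) + c ^ 2 • T 1 := by
      rw [hT.map_add _ _ hff (MemL1pLinf.one.smul _), hT.map_smul _ _ .one]
    _ ≤ T (f * f) + c ^ 2 • 1 := by
      gcongr
      exact hT.map_one_le

theorem norm_two (hT : IsPosDS μ T) (hf : f ∈ Lp ℝ 2 μ) :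
    eLpNorm (T f) 2 μ ≤ eLpNorm f 2 μ := by
  rw [← ENNReal.pow_le_pow_left_iff two_ne_zero, eLpNorm_two_pow_two, eLpNorm_two_pow_two]
  refine (eLpNorm_mono_of_abs_le ?_).trans
    (hT.norm_one (f * f) (.of_mem_Lp_one (mul_self_mem_Lp_one hf)))
  rw [abs_of_nonneg (aeEqFun_mul_self_nonneg (T f))]
  exact hT.mul_self_map_le hf

end IsPosDS

/-! ### Hopf's maximal ergodic inequality -/

/-- Hopf's recursion `M₀ = 0`, `M_{n+1} = (f - c + T M_n)⁺`. For a positive Dunford–Schwartz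
operator, `M_n` dominates `∑_{j<k} T^j f - k c` for every `k ≤ n`. -/
noncomputable def hopfMax {μ : Measure Ω} (T : (Ω →ₘ[μ] ℝ) → (Ω →ₘ[μ] ℝ)) (f : Ω →ₘ[μ] ℝ)
    (c : ℝ) : ℕ → (Ω →ₘ[μ] ℝ)
  | 0 => 0
  | n + 1 => 0 ⊔ (f - c • 1 + T (hopfMax T f c n))

section HopfMax

variable {μ : Measure Ω} {T : (Ω →ₘ[μ] ℝ) → (Ω →ₘ[μ] ℝ)} {f : Ω →ₘ[μ] ℝ} {c : ℝ}

theorem hopfMax_nonneg (T : (Ω →ₘ[μ] ℝ) → (Ω →ₘ[μ] ℝ)) (f : Ω →ₘ[μ] ℝ) (c : ℝ) :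
    ∀ n, 0 ≤ hopfMax T f c n
  | 0 => le_rfl
  | _ + 1 => le_sup_left

theorem hopfMax_succ_ae (T : (Ω →ₘ[μ] ℝ) → (Ω →ₘ[μ] ℝ)) (f : Ω →ₘ[μ] ℝ) (c : ℝ) (n : ℕ) :
    ∀ᵐ x ∂μ, hopfMax T f c (n + 1) x = 0 ⊔ (f x - c + T (hopfMax T f c n) x) := by
  filter_upwards [AEEqFun.coeFn_sup 0 (f - c • 1 + T (hopfMax T f c n)),
    AEEqFun.coeFn_add (f - c • 1) (T (hopfMax T f c n)), AEEqFun.coeFn_sub f (c • 1),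
    AEEqFun.coeFn_smul c (1 : Ω →ₘ[μ] ℝ), AEEqFun.coeFn_one (μ := μ) (β := ℝ),
    AEEqFun.coeFn_zero (μ := μ) (β := ℝ)] with x hsup hadd hsub hsmul h1 h0
  simp only [hopfMax, hsup, hadd, hsub, hsmul, h1, h0, Pi.add_apply, Pi.sub_apply, Pi.smul_apply,
    Pi.one_apply, Pi.zero_apply, smul_eq_mul, mul_one]

namespace IsPosDS

theorem hopfMax_succ_le (hT : IsPosDS μ T) {n : ℕ} (hf : 0 ≤ f) (hc : 0 ≤ c)
    (hM : MemL1pLinf μ (hopfMax T f c n)) : hopfMax T f c (n + 1) ≤ f + T (hopfMax T f c n) := by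
  have hTM := hT.map_pos _ hM (hopfMax_nonneg T f c n)
  have hfc : f - c • 1 ≤ f := sub_le_self f (smul_nonneg hc aeEqFun_one_nonneg)
  exact sup_le (add_nonneg hf hTM) (add_le_add_left hfc _)

theorem hopfMax_mem_Lp_one (hT : IsPosDS μ T) (hf : f ∈ Lp ℝ 1 μ) (hf₀ : 0 ≤ f) (hc : 0 ≤ c) :
    ∀ n, hopfMax T f c n ∈ Lp ℝ 1 μ
  | 0 => zero_mem _
  | n + 1 => by
    have hM := hT.hopfMax_mem_Lp_one hf hf₀ hc n
    refine mem_Lp_of_abs_le (add_mem hf (hT.map_mem_Lp_one hM)) ?_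
    rw [abs_of_nonneg (hopfMax_nonneg T f c _)]
    exact hT.hopfMax_succ_le hf₀ hc (.of_mem_Lp_one hM)

theorem hopfMax_le_succ (hT : IsPosDS μ T) (hf : f ∈ Lp ℝ 1 μ) (hf₀ : 0 ≤ f) (hc : 0 ≤ c) :
    ∀ n, hopfMax T f c n ≤ hopfMax T f c (n + 1)
  | 0 => hopfMax_nonneg T f c 1
  | n + 1 => by
    have hM (k : ℕ) : MemL1pLinf μ (hopfMax T f c k) :=
      .of_mem_Lp_one (hT.hopfMax_mem_Lp_one hf hf₀ hc k)
    exact sup_le_sup_left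
      (add_le_add_right (hT.mono (hM n) (hM (n + 1)) (hT.hopfMax_le_succ hf hf₀ hc n)) _) _

theorem sum_iterate_sub_le_hopfMax (hT : IsPosDS μ T) (hf : f ∈ Lp ℝ 1 μ) (hf₀ : 0 ≤ f)
    (hc : 0 ≤ c) {k n : ℕ} (hkn : k ≤ n) :
    ∑ j ∈ Finset.range k, T^[j] f - (k * c) • 1 ≤ hopfMax T f c n := by
  induction k generalizing n with
  | zero => simpa using hopfMax_nonneg T f c n
  | succ k ih =>
    obtain ⟨n, rfl⟩ := Nat.exists_eq_add_of_le' (Nat.one_le_of_lt hkn)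
    have hTf (j : ℕ) : MemL1pLinf μ (T^[j] f) := (hT.iterate j).map_mem (.of_mem_Lp_one hf)
    have hSum : MemL1pLinf μ (∑ j ∈ Finset.range k, T^[j] f) := .sum hTf _
    have hone : MemL1pLinf μ (((k : ℝ) * c) • 1) := .smul _ .one
    have hM : MemL1pLinf μ (hopfMax T f c n) :=
      .of_mem_Lp_one (hT.hopfMax_mem_Lp_one hf hf₀ hc n)
    calc ∑ j ∈ Finset.range (k + 1), T^[j] f - ((k + 1 : ℕ) * c) • 1
        = f - c • 1 + (T (∑ j ∈ Finset.range k, T^[j] f) - ((k : ℝ) * c) • 1) := by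
          rw [Finset.sum_range_succ', hT.map_sum hTf, Function.iterate_zero_apply, Nat.cast_succ,
            add_one_mul, add_smul]
          simp only [Function.iterate_succ_apply']
          abel
      _ ≤ f - c • 1 + (T (∑ j ∈ Finset.range k, T^[j] f) - ((k : ℝ) * c) • T 1) := by
          gcongr
          exact hT.map_one_le
      _ = f - c • 1 + T (∑ j ∈ Finset.range k, T^[j] f - ((k : ℝ) * c) • 1) := by
          rw [hT.map_sub hSum hone, hT.map_smul _ _ .one]
      _ ≤ f - c • 1 + T (hopfMax T f c n) := by
          gcongr
          exact hT.mono (hSum.sub hone) hM (ih (Nat.le_of_lt_succ hkn))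
      _ ≤ hopfMax T f c (n + 1) := le_sup_right

theorem eLpNorm_add_map_hopfMax_sub_le (hT : IsPosDS μ T) (hf : f ∈ Lp ℝ 1 μ) (hf₀ : 0 ≤ f)
    (hc : 0 ≤ c) (n : ℕ) :
    eLpNorm (f + T (hopfMax T f c n) - hopfMax T f c (n + 1) : Ω →ₘ[μ] ℝ) 1 μ
      ≤ eLpNorm f 1 μ := by
  have hM := hT.hopfMax_mem_Lp_one hf hf₀ hc
  have hMn : MemL1pLinf μ (hopfMax T f c n) := .of_mem_Lp_one (hM n)
  refine (ENNReal.add_le_add_iff_right (Lp.mem_Lp_iff_eLpNorm_lt_top.1 (hM (n + 1))).ne).1 ?_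
  calc eLpNorm (f + T (hopfMax T f c n) - hopfMax T f c (n + 1) : Ω →ₘ[μ] ℝ) 1 μ
        + eLpNorm (hopfMax T f c (n + 1)) 1 μ
      = eLpNorm f 1 μ + eLpNorm (T (hopfMax T f c n)) 1 μ := by
        rw [← eLpNorm_one_add_of_nonneg (sub_nonneg.2 (hT.hopfMax_succ_le hf₀ hc hMn))
          (hopfMax_nonneg T f c _), sub_add_cancel,
          eLpNorm_one_add_of_nonneg hf₀ (hT.map_pos _ hMn (hopfMax_nonneg T f c n))]
    _ ≤ eLpNorm f 1 μ + eLpNorm (hopfMax T f c (n + 1)) 1 μ := by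
        gcongr
        refine (hT.norm_one _ hMn).trans (eLpNorm_mono_of_abs_le ?_)
        rw [abs_of_nonneg (hopfMax_nonneg T f c n)]
        exact hT.hopfMax_le_succ hf hf₀ hc n

theorem mul_meas_hopfMax_pos_le (hT : IsPosDS μ T) (hf : f ∈ Lp ℝ 1 μ) (hf₀ : 0 ≤ f)
    (hc : 0 ≤ c) (n : ℕ) :
    ENNReal.ofReal c * μ {x | 0 < hopfMax T f c (n + 1) x} ≤ eLpNorm f 1 μ := by
  set φ := f + T (hopfMax T f c n) - hopfMax T f c (n + 1) with hφ
  have hφ_eq : ∀ᵐ x ∂μ, 0 < hopfMax T f c (n + 1) x → φ x = c := by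
    filter_upwards [hopfMax_succ_ae T f c n, AEEqFun.coeFn_add f (T (hopfMax T f c n)),
      AEEqFun.coeFn_sub (f + T (hopfMax T f c n)) (hopfMax T f c (n + 1))] with x hx hadd hsub hpos
    have hpos' : 0 < f x - c + T (hopfMax T f c n) x := by simpa [hx] using hpos
    rw [hφ, hsub, Pi.sub_apply, hadd, Pi.add_apply, hx, sup_of_le_right hpos'.le]
    ring
  calc ENNReal.ofReal c * μ {x | 0 < hopfMax T f c (n + 1) x}
      ≤ ENNReal.ofReal c * μ {x | ENNReal.ofReal c ≤ ‖φ x‖ₑ} := by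
        refine mul_le_mul_right (measure_mono_ae (hφ_eq.mono fun x hx hpos => ?_)) _
        exact (congrArg (‖·‖ₑ) (hx hpos)).trans (Real.enorm_of_nonneg hc) |>.ge
    _ ≤ ∫⁻ x, ‖φ x‖ₑ ∂μ := mul_meas_ge_le_lintegral₀ φ.aemeasurable.enorm _
    _ = eLpNorm φ 1 μ := eLpNorm_one_eq_lintegral_enorm.symm
    _ ≤ eLpNorm f 1 μ := hT.eLpNorm_add_map_hopfMax_sub_le hf hf₀ hc n

end IsPosDS

end HopfMax

namespace IsPosDS

variable {μ : Measure Ω} {T : (Ω →ₘ[μ] ℝ) → (Ω →ₘ[μ] ℝ)} {f : Ω →ₘ[μ] ℝ} {c : ℝ}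

theorem ae_hopfMax_pos_of_lt_cesaro (hT : IsPosDS μ T) (hf : f ∈ Lp ℝ 1 μ) (hf₀ : 0 ≤ f)
    (hc : 0 ≤ c) {k n : ℕ} (hkn : k ≤ n) :
    ∀ᵐ x ∂μ, c < cesaro μ T k f x → 0 < hopfMax T f c n x := by
  filter_upwards [AEEqFun.coeFn_le.2 (hT.sum_iterate_sub_le_hopfMax hf hf₀ hc hkn),
    AEEqFun.coeFn_sub (∑ j ∈ Finset.range k, T^[j] f) ((k * c) • 1),
    AEEqFun.coeFn_smul (k * c) (1 : Ω →ₘ[μ] ℝ), AEEqFun.coeFn_one (μ := μ) (β := ℝ),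
    AEEqFun.coeFn_smul (k : ℝ)⁻¹ (∑ j ∈ Finset.range k, T^[j] f)] with x hx hsub hsmul h1 hces hlt
  rw [cesaro, hces, Pi.smul_apply, smul_eq_mul] at hlt
  have hk : (0 : ℝ) < k := by
    refine Nat.cast_pos.2 (Nat.pos_of_ne_zero ?_)
    rintro rfl
    simp [hc.not_gt] at hlt
  rw [hsub, Pi.sub_apply, hsmul, Pi.smul_apply, h1, Pi.one_apply, smul_eq_mul, mul_one] at hx
  rw [inv_mul_eq_div, lt_div_iff₀' hk] at hlt
  exact (sub_pos.2 hlt).trans_le hx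

theorem mul_meas_exists_lt_cesaro_le (hT : IsPosDS μ T) (hf : f ∈ Lp ℝ 1 μ) (hf₀ : 0 ≤ f)
    (hc : 0 ≤ c) :
    ENNReal.ofReal c * μ {x | ∃ n, c < cesaro μ T n f x} ≤ eLpNorm f 1 μ := by
  have hunion : {x | ∃ n, c < cesaro μ T n f x} =
      ⋃ n, {x | ∃ k ≤ n, c < cesaro μ T k f x} := by
    ext x
    simp only [mem_ofPred_eq, mem_iUnion]
    exact ⟨fun ⟨n, hn⟩ => ⟨n, n, le_rfl, hn⟩, fun ⟨_, k, _, hk⟩ => ⟨k, hk⟩⟩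
  have hmono : Monotone fun n => {x | ∃ k ≤ n, c < cesaro μ T k f x} :=
    fun _ _ hmn _ ⟨k, hk, hlt⟩ => ⟨k, hk.trans hmn, hlt⟩
  rw [hunion, hmono.measure_iUnion, ENNReal.mul_iSup]
  refine iSup_le fun n => le_trans ?_ (hT.mul_meas_hopfMax_pos_le hf hf₀ hc n)
  refine mul_le_mul_right (measure_mono_ae ?_) _
  have hpos : ∀ᵐ x ∂μ, ∀ k ≤ n, c < cesaro μ T k f x → 0 < hopfMax T f c (n + 1) x :=
    ae_all_iff.2 fun k => ae_all_iff.2 fun hk =>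
      hT.ae_hopfMax_pos_of_lt_cesaro hf hf₀ hc (hk.trans n.le_succ)
  exact hpos.mono fun x hx ⟨k, hk, hlt⟩ => hx k hk hlt

theorem weak_type_one (hT : IsPosDS μ T) (hf : f ∈ Lp ℝ 1 μ) (hc : 0 ≤ c) :
    ENNReal.ofReal c * μ {x | ∃ n, c < |cesaro μ T n f x|} ≤ eLpNorm f 1 μ := by
  have hf_abs : |f| ∈ Lp ℝ 1 μ := by
    rwa [Lp.mem_Lp_iff_eLpNorm_lt_top, eLpNorm_aeEqFun_abs, ← Lp.mem_Lp_iff_eLpNorm_lt_top]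
  rw [← eLpNorm_aeEqFun_abs 1 f]
  refine le_trans ?_ (hT.mul_meas_exists_lt_cesaro_le hf_abs (abs_nonneg f) hc)
  refine mul_le_mul_right (measure_mono_ae ?_) _
  have habs : ∀ᵐ x ∂μ, ∀ n, |cesaro μ T n f x| ≤ cesaro μ T n |f| x := by
    refine ae_all_iff.2 fun n => ?_
    filter_upwards [AEEqFun.coeFn_le.2 ((hT.cesaro n).abs_map_le (.of_mem_Lp_one hf)
      (.of_mem_Lp_one hf_abs)), AEEqFun.coeFn_abs (cesaro μ T n f)] with x hle hx
    rwa [← hx]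
  exact habs.mono fun x hx ⟨n, hn⟩ => ⟨n, hn.trans_le (hx n)⟩

theorem weak_type_two (hT : IsPosDS μ T) (hf : f ∈ Lp ℝ 2 μ) (hc : 0 ≤ c) :
    ENNReal.ofReal c ^ 2 * μ {x | ∃ n, c < |cesaro μ T n f x|} ≤ eLpNorm f 2 μ ^ 2 := by
  rw [eLpNorm_two_pow_two, ← ENNReal.ofReal_pow hc]
  refine le_trans ?_ (hT.mul_meas_exists_lt_cesaro_le (mul_self_mem_Lp_one hf)
    (aeEqFun_mul_self_nonneg f) (sq_nonneg c))
  refine mul_le_mul_right (measure_mono_ae ?_) _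
  have hsq : ∀ᵐ x ∂μ, ∀ n, cesaro μ T n f x ^ 2 ≤ cesaro μ T n (f * f) x := by
    refine ae_all_iff.2 fun n => ?_
    filter_upwards [AEEqFun.coeFn_le.2 ((hT.cesaro n).mul_self_map_le hf),
      AEEqFun.coeFn_mul (cesaro μ T n f) (cesaro μ T n f)] with x hle hx
    rwa [hx, Pi.mul_apply, ← sq] at hle
  refine hsq.mono fun x hx ⟨n, hn⟩ => ⟨n, lt_of_lt_of_le ?_ (hx n)⟩
  rw [← sq_abs (cesaro μ T n f x)]
  exact pow_lt_pow_left₀ hn hc two_ne_zero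

end IsPosDS

/-! ### Almost uniform convergence -/

section AlmostUniform

variable {μ : Measure Ω} {ι : Type*} {l : Filter ι} {F G : ι → Ω →ₘ[μ] ℝ} {f g : Ω →ₘ[μ] ℝ}

theorem ennreal_tendsto_zero_iff_ofReal {u : ι → ℝ≥0∞} :
    Tendsto u l (𝓝 0) ↔ ∀ η : ℝ, 0 < η → ∀ᶠ i in l, u i ≤ ENNReal.ofReal η := by
  refine ENNReal.tendsto_nhds_zero.trans ⟨fun h η hη => h _ (ENNReal.ofReal_pos.2 hη), ?_⟩
  intro h ε hε
  obtain ⟨r, hr, hrε⟩ := ENNReal.lt_iff_exists_nnreal_btwn.1 hε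
  filter_upwards [h r (by exact_mod_cast hr)] with i hi
  exact (hi.trans_eq ENNReal.ofReal_coe_nnreal).trans hrε.le

theorem eLpNorm_indicator_sub_top_le_iff {E : Set Ω} {η : ℝ} (hη : 0 ≤ η) :
    eLpNorm (E.indicator ⇑(f - g)) ⊤ μ ≤ ENNReal.ofReal η ↔ ∀ᵐ x ∂μ, x ∈ E → |f x - g x| ≤ η := by
  rw [eLpNorm_exponent_top]
  constructor
  · intro h
    filter_upwards [enorm_ae_le_eLpNormEssSup (E.indicator ⇑(f - g)) μ, AEEqFun.coeFn_sub f g]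
      with x hx hsub hxE
    rw [indicator_of_mem hxE, hsub, ← ofReal_norm] at hx
    exact (ENNReal.ofReal_le_ofReal_iff hη).1 (hx.trans h)
  · intro h
    refine eLpNormEssSup_le_of_ae_bound ?_
    filter_upwards [h, AEEqFun.coeFn_sub f g] with x hx hsub
    by_cases hxE : x ∈ E
    · rw [indicator_of_mem hxE, hsub]
      exact hx hxE
    · rwa [indicator_of_notMem hxE, norm_zero]

theorem auTendsto_iff :
    AuTendsto μ l F f ↔ ∀ ε : ℝ, 0 < ε → ∃ E : Set Ω, MeasurableSet E ∧ μ Eᶜ ≤ ENNReal.ofReal ε ∧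
      ∀ η : ℝ, 0 < η → ∀ᶠ i in l, ∀ᵐ x ∂μ, x ∈ E → |F i x - f x| ≤ η := by
  simp only [AuTendsto, ennreal_tendsto_zero_iff_ofReal]
  refine forall₂_congr fun ε _ => exists_congr fun E => and_congr_right fun _ =>
    and_congr_right fun _ => forall₂_congr fun η hη => eventually_congr (.of_forall fun i => ?_)
  exact eLpNorm_indicator_sub_top_le_iff hη.le

/-- The sequence `u` is almost uniformly Cauchy: its oscillation after time `N` exceeds `δ` only
on a set whose measure becomes arbitrarily small as `N` grows. -/
def AuCauchy (μ : Measure Ω) (u : ℕ → Ω →ₘ[μ] ℝ) : Prop :=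
  ∀ δ : ℝ, 0 < δ → ∀ ε : ℝ≥0∞, ε ≠ 0 →
    ∃ N, μ {x | ∃ m ≥ N, ∃ n ≥ N, δ < |u m x - u n x|} ≤ ε

namespace AuCauchy

variable {u : ℕ → Ω →ₘ[μ] ℝ}

theorem of_approx (h : ∀ δ : ℝ, 0 < δ → ∀ ε : ℝ≥0∞, ε ≠ 0 →
      ∃ v : ℕ → Ω →ₘ[μ] ℝ, AuCauchy μ v ∧ μ {x | ∃ n, δ < |u n x - v n x|} ≤ ε) :
    AuCauchy μ u := by
  intro δ hδ ε hε
  have hε2 : ε / 2 ≠ 0 := by simpa using hε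
  obtain ⟨v, hv, huv⟩ := h (δ / 3) (by positivity) (ε / 2) hε2
  obtain ⟨N, hN⟩ := hv (δ / 3) (by positivity) (ε / 2) hε2
  refine ⟨N, ?_⟩
  calc μ {x | ∃ m ≥ N, ∃ n ≥ N, δ < |u m x - u n x|}
      ≤ μ ({x | ∃ n, δ / 3 < |u n x - v n x|} ∪
          {x | ∃ m ≥ N, ∃ n ≥ N, δ / 3 < |v m x - v n x|}) := by
        refine measure_mono fun x ⟨m, hm, n, hn, hmn⟩ => ?_
        by_contra! hx
        simp only [mem_union, mem_ofPred_eq, not_or, not_exists, not_and, not_lt] at hx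
        obtain ⟨huvx, hvx⟩ := hx
        have hm_le := abs_le.1 (huvx m)
        have hn_le := abs_le.1 (huvx n)
        have hv_le := abs_le.1 (hvx m hm n hn)
        exact hmn.not_ge (abs_le.2 ⟨by linarith, by linarith⟩)
    _ ≤ ε / 2 + ε / 2 := (measure_union_le _ _).trans (add_le_add huv hN)
    _ = ε := ENNReal.add_halves ε

theorem of_tendsto_eLpNorm_top (h : Tendsto (fun n => eLpNorm ⇑(u n - g) ⊤ μ) atTop (𝓝 0)) :
    AuCauchy μ u := by
  intro δ hδ ε _
  obtain ⟨N, hN⟩ := eventually_atTop.1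
    (ennreal_tendsto_zero_iff_ofReal.1 h (δ / 2) (by positivity))
  have hclose : ∀ᵐ x ∂μ, ∀ n ≥ N, |u n x - g x| ≤ δ / 2 := by
    refine ae_all_iff.2 fun n => ae_all_iff.2 fun hn => ?_
    have hn_le := hN n hn
    rw [← indicator_univ (⇑(u n - g)), eLpNorm_indicator_sub_top_le_iff (by positivity)] at hn_le
    simpa only [mem_univ, forall_const] using hn_le
  refine ⟨N, le_of_eq_of_le (measure_eq_zero_iff_ae_notMem.2 ?_) zero_le⟩
  filter_upwards [hclose] with x hx
  rintro ⟨m, hm, n, hn, hmn⟩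
  have hm_le := abs_le.1 (hx m hm)
  have hn_le := abs_le.1 (hx n hn)
  exact hmn.not_ge (abs_le.2 ⟨by linarith, by linarith⟩)

theorem exists_forall_mem_abs_sub_le (hu : AuCauchy μ u) {ε : ℝ≥0∞} (hε : ε ≠ 0) :
    ∃ E : Set Ω, MeasurableSet E ∧ μ Eᶜ ≤ ε ∧
      ∀ δ : ℝ, 0 < δ → ∃ N, ∀ m ≥ N, ∀ n ≥ N, ∀ x ∈ E, |u m x - u n x| ≤ δ := by
  obtain ⟨ε', hε', hsum⟩ := ENNReal.exists_pos_sum_of_countable hε ℕ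
  choose N hN using fun j : ℕ =>
    hu (1 / (j + 1)) (by positivity) (ε' j) (by exact_mod_cast (hε' j).ne')
  set B : ℕ → Set Ω := fun j => {x | ∃ m ≥ N j, ∃ n ≥ N j, 1 / ((j : ℝ) + 1) < |u m x - u n x|}
  refine ⟨(toMeasurable μ (⋃ j, B j))ᶜ, (measurableSet_toMeasurable _ _).compl, ?_, ?_⟩
  · rw [compl_compl, measure_toMeasurable]
    exact (measure_iUnion_le B).trans ((ENNReal.tsum_le_tsum hN).trans hsum.le)
  · intro δ hδ
    obtain ⟨j, hj⟩ := exists_nat_one_div_lt hδ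
    refine ⟨N j, fun m hm n hn x hx => ?_⟩
    by_contra! hmn
    exact hx (subset_toMeasurable μ _ (mem_iUnion.2 ⟨j, m, hm, n, hn, hj.trans hmn⟩))

theorem ae_cauchySeq (hu : AuCauchy μ u) : ∀ᵐ x ∂μ, CauchySeq fun n => u n x := by
  refine nonpos_iff_eq_zero.1 (le_of_forall_gt_imp_ge_of_dense fun ε hε => ?_)
  obtain ⟨E, -, hEμ, hE⟩ := hu.exists_forall_mem_abs_sub_le hε.ne'
  refine (measure_mono (t := Eᶜ) fun x hx hxE => (not_not.2 ?_) hx).trans hEμ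
  refine Metric.cauchySeq_iff.2 fun δ hδ => ?_
  obtain ⟨N, hN⟩ := hE (δ / 2) (by positivity)
  exact ⟨N, fun m hm n hn => (hN m hm n hn x hxE).trans_lt (half_lt_self hδ)⟩

theorem exists_auTendsto (hu : AuCauchy μ u) : ∃ f, AuTendsto μ atTop u f := by
  obtain ⟨f, hf, hlim⟩ := exists_stronglyMeasurable_limit_of_tendsto_ae
    (fun n => (u n).aestronglyMeasurable)
    (hu.ae_cauchySeq.mono fun x hx => cauchySeq_tendsto_of_complete hx)
  refine ⟨AEEqFun.mk f hf.aestronglyMeasurable, auTendsto_iff.2 fun ε hε => ?_⟩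
  obtain ⟨E, hE, hEμ, hunif⟩ := hu.exists_forall_mem_abs_sub_le (ENNReal.ofReal_pos.2 hε).ne'
  refine ⟨E, hE, hEμ, fun η hη => ?_⟩
  obtain ⟨N, hN⟩ := hunif η hη
  filter_upwards [eventually_ge_atTop N] with n hn
  filter_upwards [hlim, AEEqFun.coeFn_mk f hf.aestronglyMeasurable] with x hx hfx hxE
  rw [hfx]
  refine le_of_tendsto (tendsto_const_nhds.sub hx).abs ?_
  filter_upwards [eventually_ge_atTop N] with m hm
  exact hN n hn m hm x hxE

end AuCauchy

end AlmostUniform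

section AlmostUniformAlgebra

variable {μ : Measure Ω} {ι : Type*} {l : Filter ι} {F G : ι → Ω →ₘ[μ] ℝ} {f g : Ω →ₘ[μ] ℝ}

theorem tendsto_measure_lt_abs_of_mem_Lp {p : ℝ≥0∞} (hp : p ≠ 0) (hp_top : p ≠ ⊤)
    (hf : f ∈ Lp ℝ p μ) : Tendsto (fun C : ℝ => μ {x | C < |f x|}) atTop (𝓝 0) := by
  have hbound : Tendsto
      (fun C : ℝ => (ENNReal.ofReal C)⁻¹ ^ p.toReal * eLpNorm f p μ ^ p.toReal) atTop (𝓝 0) := by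
    have hpow : Tendsto (fun C : ℝ => (ENNReal.ofReal C)⁻¹ ^ p.toReal) atTop (𝓝 0) := by
      have hinv := tendsto_inv_iff.2 ENNReal.tendsto_ofReal_atTop
      simpa [ENNReal.toReal_pos hp hp_top] using hinv.ennrpow_const p.toReal
    simpa using ENNReal.Tendsto.mul_const hpow
      (.inr (ENNReal.rpow_ne_top_of_nonneg toReal_nonneg (Lp.mem_Lp_iff_eLpNorm_lt_top.1 hf).ne))
  refine tendsto_of_tendsto_of_tendsto_of_le_of_le' tendsto_const_nhds hbound
    (.of_forall fun _ => zero_le) ?_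
  filter_upwards [eventually_gt_atTop 0] with C hC
  refine (measure_mono fun x hx => ?_).trans
    (meas_ge_le_mul_pow_eLpNorm_enorm μ hp hp_top f.aestronglyMeasurable
      (ENNReal.ofReal_pos.2 hC).ne' (by simp))
  rw [mem_ofPred_eq, ← ofReal_norm]
  exact ENNReal.ofReal_le_ofReal (le_of_lt hx)

namespace AuTendsto

theorem comp_tendsto (hF : AuTendsto μ l F f) {κ : Type*} {l' : Filter κ} {φ : κ → ι}
    (hφ : Tendsto φ l' l) : AuTendsto μ l' (F ∘ φ) f := by
  intro ε hε
  obtain ⟨E, hE, hEμ, hlim⟩ := hF ε hε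
  exact ⟨E, hE, hEμ, hlim.comp hφ⟩

theorem exists_forall_and (hF : AuTendsto μ l F f) (hG : AuTendsto μ l G g) {ε : ℝ} (hε : 0 < ε) :
    ∃ E : Set Ω, MeasurableSet E ∧ μ Eᶜ ≤ ENNReal.ofReal ε ∧ ∀ η : ℝ, 0 < η →
      ∀ᶠ i in l, ∀ᵐ x ∂μ, x ∈ E → |F i x - f x| ≤ η ∧ |G i x - g x| ≤ η := by
  obtain ⟨A, hA, hAμ, hAF⟩ := auTendsto_iff.1 hF (ε / 2) (by positivity)
  obtain ⟨B, hB, hBμ, hBG⟩ := auTendsto_iff.1 hG (ε / 2) (by positivity)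
  refine ⟨A ∩ B, hA.inter hB, ?_, fun η hη => ?_⟩
  · calc μ (A ∩ B)ᶜ ≤ μ Aᶜ + μ Bᶜ := by
          rw [compl_inter]
          exact measure_union_le _ _
      _ ≤ ENNReal.ofReal (ε / 2) + ENNReal.ofReal (ε / 2) := add_le_add hAμ hBμ
      _ = ENNReal.ofReal ε := by
          rw [← ENNReal.ofReal_add (by positivity) (by positivity), add_halves]
  · filter_upwards [hAF η hη, hBG η hη] with i hFi hGi
    filter_upwards [hFi, hGi] with x hFx hGx hx
    exact ⟨hFx hx.1, hGx hx.2⟩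

protected theorem sub (hF : AuTendsto μ l F f) (hG : AuTendsto μ l G g) :
    AuTendsto μ l (fun i => F i - G i) (f - g) := by
  refine auTendsto_iff.2 fun ε hε => ?_
  obtain ⟨E, hE, hEμ, hFG⟩ := hF.exists_forall_and hG hε
  refine ⟨E, hE, hEμ, fun η hη => ?_⟩
  filter_upwards [hFG (η / 2) (by positivity)] with i hi
  filter_upwards [hi, AEEqFun.coeFn_sub (F i) (G i), AEEqFun.coeFn_sub f g] with x hx hFGx hfgx hxE
  obtain ⟨hFx, hGx⟩ := hx hxE
  rw [hFGx, hfgx, Pi.sub_apply, Pi.sub_apply]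
  rw [abs_le] at hFx hGx ⊢
  constructor <;> linarith

theorem squeeze {H : ι → Ω →ₘ[μ] ℝ} (hF : AuTendsto μ l F f) (hG : AuTendsto μ l G f)
    (hFH : ∀ᶠ i in l, F i ≤ H i) (hHG : ∀ᶠ i in l, H i ≤ G i) : AuTendsto μ l H f := by
  refine auTendsto_iff.2 fun ε hε => ?_
  obtain ⟨E, hE, hEμ, hFG⟩ := hF.exists_forall_and hG hε
  refine ⟨E, hE, hEμ, fun η hη => ?_⟩
  filter_upwards [hFG η hη, hFH, hHG] with i hi hFHi hHGi
  filter_upwards [hi, AEEqFun.coeFn_le.2 hFHi, AEEqFun.coeFn_le.2 hHGi]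
    with x hx hFHx hHGx hxE
  obtain ⟨hFx, hGx⟩ := hx hxE
  rw [abs_le] at hFx hGx ⊢
  constructor <;> linarith

theorem tendsto_measure_lt_abs [l.NeBot] (hF : AuTendsto μ l F f)
    (htail : ∀ i, Tendsto (fun C : ℝ => μ {x | C < |F i x|}) atTop (𝓝 0)) :
    Tendsto (fun C : ℝ => μ {x | C < |f x|}) atTop (𝓝 0) := by
  refine ennreal_tendsto_zero_iff_ofReal.2 fun ε hε => ?_
  obtain ⟨E, -, hEμ, hEF⟩ := auTendsto_iff.1 hF (ε / 2) (by positivity)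
  obtain ⟨i, hi⟩ := (hEF 1 one_pos).exists
  have hshift := (htail i).comp (tendsto_atTop_add_const_right atTop (-1) tendsto_id)
  filter_upwards [ennreal_tendsto_zero_iff_ofReal.1 hshift (ε / 2) (by positivity)] with C hC
  calc μ {x | C < |f x|} ≤ μ (Eᶜ ∪ {x | C + -1 < |F i x|}) := by
        refine measure_mono_ae ?_
        filter_upwards [hi] with x hx hxC
        refine or_iff_not_imp_left.2 fun hxE => ?_
        have hdist := (abs_sub_abs_le_abs_sub (f x) (F i x)).trans
          ((abs_sub_comm _ _).trans_le (hx (not_not.1 hxE)))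
        have hlarge : C < |f x| := hxC
        exact show C + -1 < |F i x| by linarith
    _ ≤ ENNReal.ofReal (ε / 2) + ENNReal.ofReal (ε / 2) :=
        (measure_union_le _ _).trans (add_le_add hEμ hC)
    _ = ENNReal.ofReal ε := by
        rw [← ENNReal.ofReal_add (by positivity) (by positivity), add_halves]

theorem const_of_tendsto {c : ι → ℝ} {c₀ : ℝ} (hc : Tendsto c l (𝓝 c₀))
    (htail : Tendsto (fun C : ℝ => μ {x | C < |f x|}) atTop (𝓝 0)) :
    AuTendsto μ l (fun i => c i • f) (c₀ • f) := by
  refine auTendsto_iff.2 fun ε hε => ?_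
  obtain ⟨C, hC, hC0⟩ := ((ennreal_tendsto_zero_iff_ofReal.1 htail ε hε).and
    (eventually_gt_atTop 0)).exists
  refine ⟨(toMeasurable μ {x | C < |f x|})ᶜ, (measurableSet_toMeasurable _ _).compl,
    by rwa [compl_compl, measure_toMeasurable], fun η hη => ?_⟩
  filter_upwards [hc.eventually (Metric.closedBall_mem_nhds c₀ (div_pos hη hC0))] with i hi
  filter_upwards [AEEqFun.coeFn_smul (c i) f, AEEqFun.coeFn_smul c₀ f] with x hci hc₀ hx
  have hfx : |f x| ≤ C := not_lt.1 fun hlt => hx (subset_toMeasurable μ _ hlt)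
  calc |(c i • f) x - (c₀ • f) x| = |c i - c₀| * |f x| := by
        rw [hci, hc₀, Pi.smul_apply, Pi.smul_apply, ← sub_smul, smul_eq_mul, abs_mul]
    _ ≤ η / C * C := mul_le_mul hi hfx (abs_nonneg _) (by positivity)
    _ = η := div_mul_cancel₀ η hC0.ne'

protected theorem smul {c : ι → ℝ} {c₀ : ℝ} (hc : Tendsto c l (𝓝 c₀)) (hF : AuTendsto μ l F f)
    (htail : Tendsto (fun C : ℝ => μ {x | C < |f x|}) atTop (𝓝 0)) :
    AuTendsto μ l (fun i => c i • F i) (c₀ • f) := by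
  refine auTendsto_iff.2 fun ε hε => ?_
  obtain ⟨E, hE, hEμ, hFc⟩ := hF.exists_forall_and (const_of_tendsto hc htail) hε
  refine ⟨E, hE, hEμ, fun η hη => ?_⟩
  set K := |c₀| + 2
  have hK : 1 < K := by linarith [abs_nonneg c₀]
  filter_upwards [hFc (η / K) (by positivity),
    hc.abs.eventually_lt_const (show |c₀| < K - 1 by linarith)] with i hi hci
  filter_upwards [hi, AEEqFun.coeFn_smul (c i) (F i), AEEqFun.coeFn_smul (c i) f]
    with x hx hFx hfx hxE
  obtain ⟨hdist, hconst⟩ := hx hxE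
  calc |(c i • F i) x - (c₀ • f) x|
      = |c i * (F i x - f x) + ((c i • f) x - (c₀ • f) x)| := by
        rw [hFx, hfx, Pi.smul_apply, Pi.smul_apply, smul_eq_mul, smul_eq_mul]
        ring_nf
    _ ≤ (K - 1) * (η / K) + η / K := by
        refine (abs_add_le _ _).trans (add_le_add ?_ hconst)
        rw [abs_mul]
        exact mul_le_mul hci.le hdist (abs_nonneg _) (by linarith)
    _ = η := by
        field_simp
        ring

end AuTendsto

end AlmostUniformAlgebra

/-! ### The individual ergodic theorem -/

section MeanErgodic

variable {𝕜 E : Type*} [DivisionRing 𝕜] [AddCommGroup E] [Module 𝕜 E]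

theorem sub_iterate_mem_range_one_sub (L : Module.End 𝕜 E) (x : E) (k : ℕ) :
    x - L^[k] x ∈ LinearMap.range (1 - L) := by
  induction k with
  | zero => simp
  | succ k ih =>
    rw [Function.iterate_succ_apply', ← sub_add_sub_cancel x (L^[k] x)]
    exact add_mem ih ⟨L^[k] x, rfl⟩

theorem sub_birkhoffAverage_mem_range_one_sub [CharZero 𝕜] (L : Module.End 𝕜 E) (x : E) {n : ℕ}
    (hn : n ≠ 0) : x - birkhoffAverage 𝕜 L _root_.id n x ∈ LinearMap.range (1 - L) := by
  have hn' : (n : 𝕜) ≠ 0 := Nat.cast_ne_zero.2 hn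
  have hsum : x - birkhoffAverage 𝕜 L _root_.id n x =
      (n : 𝕜)⁻¹ • ∑ k ∈ Finset.range n, (x - L^[k] x) := by
    rw [Finset.sum_sub_distrib, Finset.sum_const, Finset.card_range, ← Nat.cast_smul_eq_nsmul 𝕜,
      smul_sub, inv_smul_smul₀ hn']
    rfl
  rw [hsum]
  exact Submodule.smul_mem _ _ (Submodule.sum_mem _ fun k _ => sub_iterate_mem_range_one_sub L x k)

theorem exists_apply_eq_self_tendsto_birkhoffAverage {H : Type*} [NormedAddCommGroup H]
    [InnerProductSpace ℝ H] [CompleteSpace H] {L : H →L[ℝ] H} (hL : ‖L‖ ≤ 1) (x : H) :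
    ∃ y, L y = y ∧ Tendsto (birkhoffAverage ℝ L _root_.id · x) atTop (𝓝 y) :=
  ⟨_, ((L.eqLocus (1 : H →L[ℝ] H)).orthogonalProjectionOnto x).2,
    L.tendsto_birkhoffAverage_orthogonalProjection hL x⟩

end MeanErgodic

namespace IsPosDS

variable {μ : Measure Ω} {T : (Ω →ₘ[μ] ℝ) → (Ω →ₘ[μ] ℝ)} {f g : Ω →ₘ[μ] ℝ} {p : ℝ≥0∞}
  [Fact (1 ≤ p)]

/-- The contraction of `L^p` induced by a Dunford–Schwartz operator that does not increase the
`L^p`-norm. -/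
noncomputable def toLp (hT : IsPosDS μ T)
    (hp : ∀ f ∈ Lp ℝ p μ, eLpNorm (T f) p μ ≤ eLpNorm f p μ) : Lp ℝ p μ →L[ℝ] Lp ℝ p μ :=
  LinearMap.mkContinuous
    { toFun := fun f => ⟨T f, Lp.mem_Lp_iff_eLpNorm_lt_top.2
        ((hp f f.2).trans_lt (Lp.mem_Lp_iff_eLpNorm_lt_top.1 f.2))⟩
      map_add' := fun f g => Subtype.ext
        (hT.map_add f g (.of_mem_Lp Fact.out f.2) (.of_mem_Lp Fact.out g.2))
      map_smul' := fun c f => Subtype.ext (hT.map_smul c f (.of_mem_Lp Fact.out f.2)) }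
    1 fun f => by
      rw [one_mul]
      exact ENNReal.toReal_mono (Lp.mem_Lp_iff_eLpNorm_lt_top.1 f.2).ne (hp f f.2)

variable (hT : IsPosDS μ T) (hp : ∀ f ∈ Lp ℝ p μ, eLpNorm (T f) p μ ≤ eLpNorm f p μ)

theorem coe_toLp (f : Lp ℝ p μ) : (hT.toLp hp f : Ω →ₘ[μ] ℝ) = T f := rfl

theorem norm_toLp_le : ‖hT.toLp hp‖ ≤ 1 := LinearMap.mkContinuous_norm_le _ zero_le_one _

theorem coe_toLp_iterate (f : Lp ℝ p μ) (n : ℕ) :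
    (((hT.toLp hp)^[n] f : Lp ℝ p μ) : Ω →ₘ[μ] ℝ) = T^[n] f :=
  Function.Semiconj.iterate_right (f := Subtype.val) (hT.coe_toLp hp) n f

theorem coe_birkhoffAverage_toLp (f : Lp ℝ p μ) (n : ℕ) :
    ((birkhoffAverage ℝ (hT.toLp hp) _root_.id n f : Lp ℝ p μ) : Ω →ₘ[μ] ℝ) = cesaro μ T n f := by
  have hsum : ((birkhoffSum (hT.toLp hp) _root_.id n f : Lp ℝ p μ) : Ω →ₘ[μ] ℝ) =
      ∑ k ∈ Finset.range n, T^[k] f := by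
    rw [birkhoffSum, AddSubgroup.val_finsetSum]
    exact Finset.sum_congr rfl fun k _ => hT.coe_toLp_iterate hp f k
  exact congrArg ((n : ℝ)⁻¹ • ·) hsum

end IsPosDS

namespace IsPosDS

variable {μ : Measure Ω} {T : (Ω →ₘ[μ] ℝ) → (Ω →ₘ[μ] ℝ)} {f g : Ω →ₘ[μ] ℝ}

theorem cesaro_of_fixed (hg : T g = g) {n : ℕ} (hn : n ≠ 0) : cesaro μ T n g = g := by
  simp only [cesaro, Function.iterate_fixed hg, Finset.sum_const, Finset.card_range]
  rw [← Nat.cast_smul_eq_nsmul ℝ, inv_smul_smul₀ (Nat.cast_ne_zero.2 hn)]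

theorem tendsto_eLpNorm_top_cesaro_sub_map (hT : IsPosDS μ T) (hf : f ∈ Lp ℝ ⊤ μ) :
    Tendsto (fun n => eLpNorm ⇑(cesaro μ T n (f - T f)) ⊤ μ) atTop (𝓝 0) := by
  have hp : ∀ f ∈ Lp ℝ ⊤ μ, eLpNorm (T f) ⊤ μ ≤ eLpNorm f ⊤ μ :=
    fun f hf => hT.norm_top f (.of_mem_Lp_top hf)
  have hf' : MemL1pLinf μ f := .of_mem_Lp_top hf
  have hbdd : ∀ k, ‖(hT.toLp hp)^[k] ⟨f, hf⟩‖ ≤ ‖(⟨f, hf⟩ : Lp ℝ ⊤ μ)‖ := fun k => by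
    rw [Lp.norm_def, coe_toLp_iterate]
    exact ENNReal.toReal_mono (Lp.mem_Lp_iff_eLpNorm_lt_top.1 hf).ne
      ((hT.iterate k).norm_top f hf')
  have hlim := (tendsto_birkhoffAverage_apply_sub_birkhoffAverage ℝ (g := _root_.id)
    (isBounded_iff_forall_norm_le.2 ⟨_, forall_mem_range.2 hbdd⟩)).neg.enorm
  rw [neg_zero, enorm_zero] at hlim
  refine hlim.congr fun n => ?_
  rw [neg_sub, Lp.enorm_def, AddSubgroup.coe_sub, coe_birkhoffAverage_toLp,
    coe_birkhoffAverage_toLp, coe_toLp, (hT.cesaro n).map_sub hf' (hT.map_mem hf')]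

theorem auCauchy_cesaro_coboundary_add (hT : IsPosDS μ T) (hf : f ∈ Lp ℝ ⊤ μ)
    (hg : MemL1pLinf μ g) (hfix : T g = g) : AuCauchy μ fun n => cesaro μ T n (f - T f + g) := by
  refine .of_tendsto_eLpNorm_top (g := g)
    ((hT.tendsto_eLpNorm_top_cesaro_sub_map hf).congr' ?_)
  filter_upwards [eventually_ne_atTop 0] with n hn
  have hf' : MemL1pLinf μ f := .of_mem_Lp_top hf
  rw [(hT.cesaro n).map_add _ _ (hf'.sub (hT.map_mem hf')) hg, cesaro_of_fixed hfix hn,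
    add_sub_cancel_right]

theorem isClosed_setOf_auCauchy_cesaro (hT : IsPosDS μ T) {p : ℝ≥0∞} [Fact (1 ≤ p)] {q : ℕ}
    (hq : q ≠ 0) (hweak : ∀ f ∈ Lp ℝ p μ, ∀ c : ℝ, 0 ≤ c →
      ENNReal.ofReal c ^ q * μ {x | ∃ n, c < |cesaro μ T n f x|} ≤ eLpNorm f p μ ^ q) :
    IsClosed {f : Lp ℝ p μ | AuCauchy μ fun n => cesaro μ T n f} := by
  refine isClosed_of_closure_subset fun f hf => .of_approx fun δ hδ ε hε => ?_
  have hlim : Tendsto (fun g : Lp ℝ p μ => edist f g ^ q) (𝓝 f) (𝓝 0) := by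
    have hcont : Continuous fun g : Lp ℝ p μ => edist f g ^ q := by fun_prop
    simpa [hq] using hcont.tendsto f
  have hδq : ENNReal.ofReal δ ^ q ≠ 0 := pow_ne_zero _ (ENNReal.ofReal_pos.2 hδ).ne'
  have hδq' : ENNReal.ofReal δ ^ q ≠ ⊤ := ENNReal.pow_ne_top ENNReal.ofReal_ne_top
  obtain ⟨g, hg, hfg⟩ := ((mem_closure_iff_frequently.1 hf).and_eventually
    (hlim.eventually_le_const (pos_iff_ne_zero.2 (mul_ne_zero hδq hε)))).exists
  refine ⟨_, hg, ?_⟩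
  rw [Lp.edist_def, ← eLpNorm_congr_ae (Lp.coeFn_sub f g)] at hfg
  calc μ {x | ∃ n, δ < |cesaro μ T n f x - cesaro μ T n g x|}
      ≤ μ {x | ∃ n, δ < |cesaro μ T n (f - g : Lp ℝ p μ) x|} := by
        refine measure_mono_ae ?_
        filter_upwards [ae_all_iff.2 fun n =>
          AEEqFun.coeFn_sub (cesaro μ T n f) (cesaro μ T n g)] with x hx
        rintro ⟨n, hn⟩
        refine ⟨n, ?_⟩
        rwa [AddSubgroup.coe_sub, (hT.cesaro n).map_sub (.of_mem_Lp Fact.out f.2)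
          (.of_mem_Lp Fact.out g.2), hx n, Pi.sub_apply]
    _ ≤ ε := (ENNReal.mul_le_mul_iff_right hδq hδq').1
        ((hweak _ (f - g).2 δ hδ.le).trans hfg)

theorem exists_sub_cesaro_eq_sub_map (hT : IsPosDS μ T) (hf : f ∈ Lp ℝ ⊤ μ) {n : ℕ} (hn : n ≠ 0) :
    ∃ h ∈ Lp ℝ ⊤ μ, f - cesaro μ T n f = h - T h := by
  have hp : ∀ f ∈ Lp ℝ ⊤ μ, eLpNorm (T f) ⊤ μ ≤ eLpNorm f ⊤ μ :=
    fun f hf => hT.norm_top f (.of_mem_Lp_top hf)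
  obtain ⟨h, hh⟩ := sub_birkhoffAverage_mem_range_one_sub (𝕜 := ℝ)
    (hT.toLp hp : Lp ℝ ⊤ μ →ₗ[ℝ] Lp ℝ ⊤ μ) ⟨f, hf⟩ hn
  refine ⟨h, h.2, ?_⟩
  rw [← hT.coe_birkhoffAverage_toLp hp ⟨f, hf⟩ n, ← hT.coe_toLp hp h]
  exact congrArg Subtype.val hh.symm

/-- If `g` is the mean ergodic limit of `f` in `L²`, then `f - A_N f + g` tends to `f` in `L²`,
and it is the sum of an `L^∞`-coboundary and a fixed vector. -/
theorem auCauchy_cesaro_of_mem_Lp_two_of_mem_Lp_top (hT : IsPosDS μ T) (hf : f ∈ Lp ℝ 2 μ)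
    (hf_top : f ∈ Lp ℝ ⊤ μ) : AuCauchy μ fun n => cesaro μ T n f := by
  have hp : ∀ f ∈ Lp ℝ 2 μ, eLpNorm (T f) 2 μ ≤ eLpNorm f 2 μ := fun f hf => hT.norm_two hf
  obtain ⟨g, hg, hmean⟩ :=
    exists_apply_eq_self_tendsto_birkhoffAverage (hT.norm_toLp_le hp) ⟨f, hf⟩
  have happrox := (hmean.const_sub (⟨f, hf⟩ : Lp ℝ 2 μ)).add_const g
  rw [sub_add_cancel] at happrox
  have hmem : ∀ᶠ N in atTop, AuCauchy μ fun n => cesaro μ T n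
      (⟨f, hf⟩ - birkhoffAverage ℝ (hT.toLp hp) _root_.id N ⟨f, hf⟩ + g : Lp ℝ 2 μ) := by
    filter_upwards [eventually_ne_atTop 0] with N hN
    obtain ⟨h, hh, hNh⟩ := hT.exists_sub_cesaro_eq_sub_map hf_top hN
    rw [AddSubgroup.coe_add, AddSubgroup.coe_sub, coe_birkhoffAverage_toLp, hNh]
    exact hT.auCauchy_cesaro_coboundary_add hh (.of_mem_Lp one_le_two g.2)
      (congrArg Subtype.val hg)
  have hclosed := hT.isClosed_setOf_auCauchy_cesaro two_ne_zero
    fun f hf c hc => hT.weak_type_two hf hc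
  exact (hclosed.mem_of_tendsto happrox hmem :)

theorem auCauchy_cesaro (hT : IsPosDS μ T) (hf : f ∈ Lp ℝ 1 μ) :
    AuCauchy μ fun n => cesaro μ T n f := by
  have hclosed := hT.isClosed_setOf_auCauchy_cesaro (p := 1) one_ne_zero
    fun f hf c hc => by simpa only [pow_one] using hT.weak_type_one hf hc
  refine (Lp.simpleFunc.denseRange (p := 1) ENNReal.one_ne_top).induction_on
    (p := fun f : Lp ℝ 1 μ => AuCauchy μ fun n => cesaro μ T n f) ⟨f, hf⟩ hclosed fun s => ?_
  have hs : s.1.1 =ᵐ[μ] Lp.simpleFunc.toSimpleFunc s := (Lp.simpleFunc.toSimpleFunc_eq_toFun s).symm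
  have hs_two : MemLp (Lp.simpleFunc.toSimpleFunc s) 2 μ :=
    (SimpleFunc.memLp_iff two_ne_zero ENNReal.ofNat_ne_top).2
      ((SimpleFunc.memLp_iff one_ne_zero ENNReal.one_ne_top).1 (Lp.simpleFunc.memLp s))
  exact hT.auCauchy_cesaro_of_mem_Lp_two_of_mem_Lp_top
    (Lp.mem_Lp_iff_memLp.2 (hs_two.ae_eq hs.symm))
    (Lp.mem_Lp_iff_memLp.2 ((SimpleFunc.memLp_top _ μ).ae_eq hs.symm))

theorem exists_auTendsto_cesaro (hT : IsPosDS μ T) (hf : f ∈ Lp ℝ 1 μ) :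
    ∃ g, AuTendsto μ atTop (fun n => cesaro μ T n f) g :=
  (hT.auCauchy_cesaro hf).exists_auTendsto

end IsPosDS

/-! ### One-parameter semigroups -/

section ShiftOrbit

variable {E : Type*} [NormedAddCommGroup E] [NormedSpace ℝ E] [CompleteSpace E] {F : ℝ → E}
  {L : E →L[ℝ] E}

theorem intervalIntegral_nat_eq_iterate (hF : ∀ n : ℕ, IntervalIntegrable F volume n ↑(n + 1))
    (hshift : ∀ s, 0 ≤ s → F (s + 1) = L (F s)) (n : ℕ) :
    ∫ s in (n : ℝ)..↑(n + 1), F s = L^[n] (∫ s in (0 : ℝ)..1, F s) := by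
  induction n with
  | zero => simp
  | succ n ih =>
    calc ∫ s in ((n + 1 : ℕ) : ℝ)..↑(n + 1 + 1), F s
        = ∫ s in (n : ℝ)..↑(n + 1), F (s + 1) := by
          rw [intervalIntegral.integral_comp_add_right, ← Nat.cast_succ, ← Nat.cast_succ]
      _ = ∫ s in (n : ℝ)..↑(n + 1), L (F s) := by
          refine intervalIntegral.integral_congr fun s hs => hshift s ?_
          rw [uIcc_of_le (by simp)] at hs
          exact (Nat.cast_nonneg n).trans hs.1
      _ = L^[n + 1] (∫ s in (0 : ℝ)..1, F s) := by
          rw [L.intervalIntegral_comp_comm (hF n), ih, Function.iterate_succ_apply']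

theorem intervalIntegral_zero_nat_eq_smul_birkhoffAverage
    (hF : ∀ n : ℕ, IntervalIntegrable F volume n ↑(n + 1))
    (hshift : ∀ s, 0 ≤ s → F (s + 1) = L (F s)) (n : ℕ) :
    ∫ s in (0 : ℝ)..n, F s = (n : ℝ) • birkhoffAverage ℝ L id n (∫ s in (0 : ℝ)..1, F s) := by
  rcases eq_or_ne n 0 with rfl | hn
  · simp
  have hsum := intervalIntegral.sum_integral_adjacent_intervals (n := n) fun k _ => hF k
  rw [birkhoffAverage, smul_inv_smul₀ (Nat.cast_ne_zero.2 hn), ← Nat.cast_zero, ← hsum]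
  exact Finset.sum_congr rfl fun k _ => by simpa using intervalIntegral_nat_eq_iterate hF hshift k

end ShiftOrbit

/-- A one-parameter semigroup `(T_s)_{s ≥ 0}` of positive Dunford–Schwartz operators which is
strongly continuous on `L¹(μ)` at every `s > 0`. The values of `T` at negative times are
irrelevant. -/
structure IsPosDSSemigroup (μ : Measure Ω) (T : ℝ → (Ω →ₘ[μ] ℝ) → (Ω →ₘ[μ] ℝ)) : Prop where
  isPosDS : ∀ s, 0 ≤ s → IsPosDS μ (T s)
  map_add_time : ∀ s r, 0 ≤ s → 0 ≤ r → ∀ f, MemL1pLinf μ f → T (s + r) f = T s (T r f)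
  tendsto_eLpNorm_sub : ∀ f : Ω →ₘ[μ] ℝ, eLpNorm f 1 μ ≠ ∞ → ∀ s : ℝ, 0 < s →
    Tendsto (fun r => eLpNorm (⇑(T r f - T s f)) 1 μ) (𝓝[Ici (0 : ℝ)] s) (𝓝 0)

namespace IsPosDSSemigroup

variable {μ : Measure Ω} {T : ℝ → (Ω →ₘ[μ] ℝ) → (Ω →ₘ[μ] ℝ)} (hT : IsPosDSSemigroup μ T)

/-- The contraction of `L¹` induced by `T_s`, extended to negative times `s` by `T_0`. -/
noncomputable def toLpOne (s : ℝ) : Lp ℝ 1 μ →L[ℝ] Lp ℝ 1 μ :=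
  (hT.isPosDS (max s 0) (le_max_right s 0)).toLp fun f hf =>
    (hT.isPosDS _ (le_max_right s 0)).norm_one f (.of_mem_Lp_one hf)

theorem norm_toLpOne_le (s : ℝ) : ‖hT.toLpOne s‖ ≤ 1 := IsPosDS.norm_toLp_le _ _

theorem coe_toLpOne {s : ℝ} (hs : 0 ≤ s) (f : Lp ℝ 1 μ) :
    (hT.toLpOne s f : Ω →ₘ[μ] ℝ) = T s f := by
  rw [toLpOne, IsPosDS.coe_toLp, max_eq_left hs]

theorem toLpOne_nonneg (s : ℝ) {f : Lp ℝ 1 μ} (hf : 0 ≤ f) : 0 ≤ hT.toLpOne s f :=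
  (hT.isPosDS _ (le_max_right s 0)).map_pos f (.of_mem_Lp_one f.2) hf

theorem toLpOne_add_time {s r : ℝ} (hs : 0 ≤ s) (hr : 0 ≤ r) (f : Lp ℝ 1 μ) :
    hT.toLpOne (s + r) f = hT.toLpOne s (hT.toLpOne r f) := by
  refine Subtype.ext ?_
  rw [hT.coe_toLpOne (add_nonneg hs hr), hT.coe_toLpOne hs, hT.coe_toLpOne hr,
    hT.map_add_time s r hs hr f (.of_mem_Lp_one f.2)]

theorem continuousOn_toLpOne (f : Lp ℝ 1 μ) : ContinuousOn (hT.toLpOne · f) (Ioi 0) := by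
  refine fun s hs => ContinuousAt.continuousWithinAt ?_
  have hlim := hT.tendsto_eLpNorm_sub f (Lp.mem_Lp_iff_eLpNorm_lt_top.1 f.2).ne s hs
  rw [nhdsWithin_eq_nhds.2 (Ici_mem_nhds hs)] at hlim
  rw [ContinuousAt, tendsto_iff_edist_tendsto_0]
  refine hlim.congr' ?_
  filter_upwards [Ici_mem_nhds hs] with r hr
  rw [Lp.edist_def, ← hT.coe_toLpOne hr, ← hT.coe_toLpOne hs.le]
  exact eLpNorm_congr_ae (AEEqFun.coeFn_sub _ _)

theorem integrableOn_toLpOne (f : Lp ℝ 1 μ) (b : ℝ) :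
    IntegrableOn (hT.toLpOne · f) (Ioc 0 b) := by
  have : IsFiniteMeasure (volume.restrict (Ioc 0 b)) := ⟨by simp⟩
  exact Integrable.of_bound
    (((hT.continuousOn_toLpOne f).mono Ioc_subset_Ioi_self).aestronglyMeasurable measurableSet_Ioc)
    ‖f‖ (.of_forall fun s => by simpa using (hT.toLpOne s).le_of_opNorm_le (hT.norm_toLpOne_le s) f)

theorem coe_integral_toLpOne_nat (f : Lp ℝ 1 μ) (n : ℕ) :
    ((∫ s in Ioc (0 : ℝ) n, hT.toLpOne s f : Lp ℝ 1 μ) : Ω →ₘ[μ] ℝ) =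
      (n : ℝ) • cesaro μ (T 1) n (∫ s in (0 : ℝ)..1, hT.toLpOne s f : Lp ℝ 1 μ) := by
  have hint (n : ℕ) : IntervalIntegrable (hT.toLpOne · f) volume n ↑(n + 1) :=
    (intervalIntegrable_iff_integrableOn_Ioc_of_le (by simp)).2
      ((hT.integrableOn_toLpOne f _).mono_set (Ioc_subset_Ioc_left n.cast_nonneg))
  rw [← intervalIntegral.integral_of_le n.cast_nonneg,
    intervalIntegral_zero_nat_eq_smul_birkhoffAverage hint
      (fun s hs => by rw [add_comm, hT.toLpOne_add_time zero_le_one hs])]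
  refine congrArg ((n : ℝ) • ·) ?_
  rw [toLpOne, IsPosDS.coe_birkhoffAverage_toLp, max_eq_left zero_le_one]

theorem exists_auTendsto_inv_smul_integral_nat (f : Lp ℝ 1 μ) : ∃ g, ∀ φ : ℝ → ℕ,
    Tendsto φ atTop atTop → Tendsto (fun t => (φ t : ℝ) / t) atTop (𝓝 1) →
      AuTendsto μ atTop (fun t : ℝ =>
        t⁻¹ • ((∫ s in Ioc (0 : ℝ) (φ t), hT.toLpOne s f : Lp ℝ 1 μ) : Ω →ₘ[μ] ℝ)) g := by
  set u : Lp ℝ 1 μ := ∫ s in (0 : ℝ)..1, hT.toLpOne s f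
  have hT₁ := hT.isPosDS 1 zero_le_one
  obtain ⟨g, hg⟩ := hT₁.exists_auTendsto_cesaro u.2
  have htail := hg.tendsto_measure_lt_abs fun n => tendsto_measure_lt_abs_of_mem_Lp one_ne_zero
    one_ne_top ((hT₁.cesaro n).map_mem_Lp_one u.2)
  refine ⟨g, fun φ hφ hφ_div => ?_⟩
  have hlim := (hg.comp_tendsto hφ).smul hφ_div htail
  simpa only [coe_integral_toLpOne_nat, smul_smul, inv_mul_eq_div, one_smul, u,
    Function.comp_apply] using hlim

theorem exists_auTendsto_inv_smul_integral_of_nonneg {f : Lp ℝ 1 μ} (hf : 0 ≤ f) :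
    ∃ g, AuTendsto μ atTop (fun t : ℝ =>
      t⁻¹ • ((∫ s in Ioc (0 : ℝ) t, hT.toLpOne s f : Lp ℝ 1 μ) : Ω →ₘ[μ] ℝ)) g := by
  have hmono {a b : ℝ} (hab : a ≤ b) :
      ((∫ s in Ioc 0 a, hT.toLpOne s f : Lp ℝ 1 μ) : Ω →ₘ[μ] ℝ) ≤
        (∫ s in Ioc 0 b, hT.toLpOne s f : Lp ℝ 1 μ) :=
    setIntegral_mono_set (hT.integrableOn_toLpOne f b)
      (.of_forall fun s => hT.toLpOne_nonneg s hf) (Ioc_subset_Ioc_right hab).eventuallyLE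
  obtain ⟨g, hg⟩ := hT.exists_auTendsto_inv_smul_integral_nat f
  refine ⟨g, (hg _ tendsto_nat_floor_atTop tendsto_nat_floor_div_atTop).squeeze
    (hg _ tendsto_nat_ceil_atTop tendsto_nat_ceil_div_atTop) ?_ ?_⟩
  · filter_upwards [eventually_ge_atTop 0] with t ht
    exact smul_le_smul_of_nonneg_left (hmono (Nat.floor_le ht)) (inv_nonneg.2 ht)
  · filter_upwards [eventually_ge_atTop 0] with t ht
    exact smul_le_smul_of_nonneg_left (hmono (Nat.le_ceil t)) (inv_nonneg.2 ht)

theorem exists_auTendsto_inv_smul_integral (f : Lp ℝ 1 μ) :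
    ∃ g, AuTendsto μ atTop (fun t : ℝ =>
      t⁻¹ • ((∫ s in Ioc (0 : ℝ) t, hT.toLpOne s f : Lp ℝ 1 μ) : Ω →ₘ[μ] ℝ)) g := by
  obtain ⟨g, hg⟩ := hT.exists_auTendsto_inv_smul_integral_of_nonneg (posPart_nonneg f)
  obtain ⟨h, hh⟩ := hT.exists_auTendsto_inv_smul_integral_of_nonneg (negPart_nonneg f)
  refine ⟨g - h, ?_⟩
  convert hg.sub hh using 2 with t
  rw [← smul_sub, ← AddSubgroup.coe_sub, ← integral_sub (hT.integrableOn_toLpOne _ t)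
    (hT.integrableOn_toLpOne _ t)]
  simp only [← map_sub, posPart_sub_negPart]

end IsPosDSSemigroup

theorem flow_averages_au_one_param_general {μ : Measure Ω}
    {T : ℝ → (Ω →ₘ[μ] ℝ) → (Ω →ₘ[μ] ℝ)} (hT : IsPosDSSemigroup μ T)
    {f : Ω →ₘ[μ] ℝ} (hf : eLpNorm f 1 μ ≠ ∞)
    {F : ℝ → Lp ℝ 1 μ} (hF : ∀ s : ℝ, 0 ≤ s → (F s : Ω →ₘ[μ] ℝ) = T s f) :
    ∃ fhat : Ω →ₘ[μ] ℝ, AuTendsto μ atTop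
      (fun t : ℝ => t⁻¹ • ((∫ s in Ioc (0 : ℝ) t, F s : Lp ℝ 1 μ) : Ω →ₘ[μ] ℝ)) fhat := by
  set f₁ : Lp ℝ 1 μ := ⟨f, Lp.mem_Lp_iff_eLpNorm_lt_top.2 hf.lt_top⟩
  have hF_eq : EqOn F (hT.toLpOne · f₁) (Ici 0) := fun s hs =>
    Subtype.ext ((hF s hs).trans (hT.coe_toLpOne hs f₁).symm)
  have hint (t : ℝ) : ∫ s in Ioc 0 t, F s = ∫ s in Ioc 0 t, hT.toLpOne s f₁ :=
    setIntegral_congr_fun measurableSet_Ioc (hF_eq.mono fun _ hs => hs.1.le)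
  simpa only [hint] using hT.exists_auTendsto_inv_smul_integral f₁

/-- **Commutative case of Corollary 5.11**: let `(T_s)_{s ≥ 0}` be a semigroup of
positive Dunford–Schwartz operators which is strongly continuous on `L¹(μ)` at every
`s > 0`.  Then for every `f ∈ L¹(μ)` the averages `(1/t) ∫₀^t T_s(f) ds`
(a Bochner integral in `L¹(μ)`, encoded by the lift `F s = T_s f ∈ L¹`) converge
almost uniformly as `t → ∞`. -/
theorem flow_averages_au_one_param (μ : Measure Ω) [SigmaFinite μ]
    (T : ℝ → (Ω →ₘ[μ] ℝ) → (Ω →ₘ[μ] ℝ))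
    (hDS : ∀ s : ℝ, 0 ≤ s → IsPosDS μ (T s))
    (hsemi : ∀ s r : ℝ, 0 ≤ s → 0 ≤ r →
      ∀ f : Ω →ₘ[μ] ℝ, MemL1pLinf μ f → T (s + r) f = T s (T r f))
    (hcont : ∀ f : Ω →ₘ[μ] ℝ, eLpNorm f 1 μ ≠ ∞ → ∀ s : ℝ, 0 < s →
      Tendsto (fun r => eLpNorm (⇑(T r f - T s f)) 1 μ) (𝓝[Set.Ici (0 : ℝ)] s) (𝓝 0))
    (f : Ω →ₘ[μ] ℝ) (hf : eLpNorm f 1 μ ≠ ∞)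
    (F : ℝ → Lp ℝ 1 μ) (hF : ∀ s : ℝ, 0 ≤ s → (F s : Ω →ₘ[μ] ℝ) = T s f) :
    ∃ fhat : Ω →ₘ[μ] ℝ,
      AuTendsto μ atTop
        (fun t : ℝ => t⁻¹ • ((∫ s in Set.Ioc (0 : ℝ) t, F s : Lp ℝ 1 μ) : Ω →ₘ[μ] ℝ))
        fhat := by
  exact flow_averages_au_one_param_general ⟨hDS, hsemi, hcont⟩ hf hF
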